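/- Let p > 1 and let q, q′ > 1 be integers both coprime to p with q ≡ q′ (mod p). Then K(p,q) = K(p,q′); that is, K(p,q) depends only on the residue of q modulo p. -/

import Mathlib

/-!
Write `δ = (p-1)(q-1)/2`; since `p, q` are coprime, `2δ = (p-1)(q-1)` exactly.

* A run of equal membership starting at `δ` is shorter than `min p q` (`lt_of_mem_KSet`): `q`
  consecutive nonnegative integers contain a multiple of `q`, and if `q` consecutive integers from
  `δ` on lie in the semigroup then so does everything from `δ` on, including the Frobenius number
  `2δ - 1 = pq - p - q`.  The same holds with `p` and `q` exchanged.
* If `2ρ < p + q - 1` and `u ∈ [0, p)` is the residue with `δ + ρ ≡ uq (mod p)`, then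
  `δ + ρ ∈ S(p,q)` if and only if `2u < p` (`mem_iff_two_mul_lt`).
* When `q` is replaced by `q' ≡ q (mod p)`, the number `2δ` is unchanged modulo `p`, so `2u` is
  unchanged modulo `p`.  Hence `u` is either unchanged for all `ρ`, or shifted by `p/2` for all `ρ`,
  according to whether `p ∣ δ' - δ`.  In the first case the membership pattern is the same, in the
  second it is complemented; either way the length of the initial run is the same.
-/

/-- The numerical semigroup generated by `p` and `q`:
all integers of the form `t*p + u*q` with `t, u ≥ 0`. -/
def Spq (p q : ℤ) : Set ℤ := {n : ℤ | ∃ t u : ℤ, 0 ≤ t ∧ 0 ≤ u ∧ n = t * p + u * q}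

/-- The set of integers `s ≥ 0` such that `δ, δ+1, …, δ+s` either all belong to `S(p,q)`
or none of them does, where `δ = (p-1)*(q-1)/2`.  `K(p,q)` is the greatest element
of this set. -/
def KSet (p q : ℤ) : Set ℤ :=
  {s : ℤ | 0 ≤ s ∧ ∀ ρ : ℤ, 0 ≤ ρ → ρ ≤ s →
    ((p - 1) * (q - 1) / 2 + ρ ∈ Spq p q ↔ (p - 1) * (q - 1) / 2 ∈ Spq p q)}

theorem two_mul_delta {p q : ℤ} (h : Int.gcd p q = 1) :
    2 * ((p - 1) * (q - 1) / 2) = (p - 1) * (q - 1) := by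
  apply Int.mul_ediv_cancel'
  rcases Int.even_or_odd p with hp | hp
  · rcases Int.even_or_odd q with hq | hq
    · have h2 : (2 : ℤ) ∣ (Int.gcd p q : ℤ) := Int.dvd_coe_gcd hp.two_dvd hq.two_dvd
      rw [h] at h2
      norm_num at h2
    · exact (hq.sub_odd odd_one).two_dvd.mul_left _
  · exact (hp.sub_odd odd_one).two_dvd.mul_right _

theorem delta_pos {p q : ℤ} (hp : 1 < p) (hq : 1 < q) (h : Int.gcd p q = 1) :
    1 ≤ (p - 1) * (q - 1) / 2 := by
  have h2 := two_mul_delta h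
  have : 0 < (p - 1) * (q - 1) := mul_pos (by omega) (by omega)
  omega

theorem Spq_comm (p q : ℤ) : Spq p q = Spq q p := by
  ext n
  constructor <;> rintro ⟨t, u, ht, hu, h⟩ <;> exact ⟨u, t, hu, ht, by rw [h]; ring⟩

theorem KSet_comm (p q : ℤ) : KSet p q = KSet q p := by
  unfold KSet
  rw [Spq_comm p q, mul_comm (p - 1)]

theorem frobenius_not_mem {p q : ℤ} (hp : 1 < p) (hq : 1 < q) (h : Int.gcd p q = 1) :
    p * q - p - q ∉ Spq p q := by
  rintro ⟨t, u, ht, hu, e⟩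
  have hco : IsCoprime p q := Int.isCoprime_iff_gcd_eq_one.mpr h
  have h1 : p ∣ u + 1 := hco.dvd_of_dvd_mul_right ⟨q - t - 1, by linear_combination -e⟩
  have h2 : q ∣ t + 1 := hco.symm.dvd_of_dvd_mul_right ⟨p - u - 1, by linear_combination -e⟩
  have h3 := Int.le_of_dvd (by omega) h1
  have h4 := Int.le_of_dvd (by omega) h2
  nlinarith

theorem lt_right_of_mem_KSet {p q s : ℤ} (hp : 1 < p) (hq : 1 < q) (h : Int.gcd p q = 1)
    (hs : s ∈ KSet p q) : s + 1 < q := by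
  by_contra hlt
  obtain ⟨hs0, hs⟩ := hs
  have h2 := two_mul_delta h
  have hpos := delta_pos hp hq h
  generalize (p - 1) * (q - 1) / 2 = d at *
  have hr (n : ℤ) : 0 ≤ n % q ∧ n % q < q :=
    ⟨Int.emod_nonneg _ (by omega), Int.emod_lt_of_pos _ (by omega)⟩
  by_cases hd : d ∈ Spq p q
  · apply frobenius_not_mem hp hq h
    -- `n` is the offset of the Frobenius number `2d - 1` from `d`; reduced modulo `q`, it falls in the run
    obtain ⟨n, hn⟩ : ∃ n, n = d - 1 := ⟨_, rfl⟩
    obtain ⟨t, u, ht, hu, e⟩ := (hs (n % q) (hr n).1 (by have := hr n; omega)).mpr hd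
    have hdiv := Int.mul_ediv_add_emod n q
    have hq0 : 0 ≤ n / q := Int.ediv_nonneg (by omega) (by omega)
    exact ⟨t, u + n / q, ht, by omega, by linear_combination e - hdiv - hn - h2⟩
  · -- `d + (-d) % q` is the first multiple of `q` that is at least `d`
    refine hd ((hs (-d % q) (hr _).1 (by have := hr (-d); omega)).mp ?_)
    have hdiv := Int.mul_ediv_add_emod (-d) q
    refine ⟨0, -(-d / q), le_rfl, ?_, by linear_combination hdiv⟩
    have := (hr (-d)).1
    by_contra hcon
    nlinarith

theorem lt_of_mem_KSet {p q s : ℤ} (hp : 1 < p) (hq : 1 < q) (h : Int.gcd p q = 1)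
    (hs : s ∈ KSet p q) : s + 1 < p ∧ s + 1 < q :=
  ⟨lt_right_of_mem_KSet hq hp (by rwa [Int.gcd_comm]) (KSet_comm p q ▸ hs),
    lt_right_of_mem_KSet hp hq h hs⟩

theorem KSet_of_le {p q s r : ℤ} (hs : s ∈ KSet p q) (hr : 0 ≤ r) (hrs : r ≤ s) : r ∈ KSet p q :=
  ⟨hr, fun ρ h0 h1 => hs.2 ρ h0 (h1.trans hrs)⟩

theorem exists_residue {p q : ℤ} (hp : 1 < p) (h : Int.gcd p q = 1) (n : ℤ) :
    ∃ u, 0 ≤ u ∧ u < p ∧ p ∣ n - u * q := by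
  obtain ⟨a, b, hab⟩ := Int.isCoprime_iff_gcd_eq_one.mpr h
  refine ⟨(n * b) % p, Int.emod_nonneg _ (by omega), Int.emod_lt_of_pos _ (by omega), ?_⟩
  have hdiv := Int.mul_ediv_add_emod (n * b) p
  exact ⟨n * a + q * (n * b / p), by linear_combination -n * hab - q * hdiv⟩

theorem eq_of_dvd_sub {p u v : ℤ} (hu : 0 ≤ u) (hup : u < p) (hv : 0 ≤ v) (hvp : v < p)
    (h : p ∣ u - v) : u = v := by
  have := Int.eq_zero_of_abs_lt_dvd h (by rw [abs_lt]; constructor <;> omega)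
  omega

/-- Near `δ`, membership in the semigroup is decided by which half of `[0, p)` contains the
residue of `(δ + ρ) / q` modulo `p`. -/
theorem mem_iff_two_mul_lt {p q ρ u : ℤ} (hp : 1 < p) (hq : 1 < q) (h : Int.gcd p q = 1)
    (hρ : 0 ≤ ρ) (hρ' : 2 * ρ < p + q - 1) (hu : 0 ≤ u) (hup : u < p)
    (hdvd : p ∣ (p - 1) * (q - 1) / 2 + ρ - u * q) :
    (p - 1) * (q - 1) / 2 + ρ ∈ Spq p q ↔ 2 * u < p := by
  have h2 := two_mul_delta h
  generalize (p - 1) * (q - 1) / 2 = d at *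
  obtain ⟨c, hc⟩ := hdvd
  constructor
  · rintro ⟨t, v, ht, hv, e⟩
    have hv2 : 2 * v < p := by
      have : 0 ≤ t * p := mul_nonneg ht (by omega)
      by_contra hcon
      nlinarith
    have hco : IsCoprime p q := Int.isCoprime_iff_gcd_eq_one.mpr h
    have huv : p ∣ u - v := hco.dvd_of_dvd_mul_right ⟨t - c, by linear_combination -hc + e⟩
    rw [eq_of_dvd_sub hu hup hv (by omega) huv]
    exact hv2
  · intro hlt
    refine ⟨c, u, ?_, hu, by linear_combination hc⟩
    have h3 : 2 * u * q ≤ (p - 1) * q := mul_le_mul_of_nonneg_right (by omega) (by omega)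
    by_contra hcon
    have h4 : p * c ≤ p * (-1) := mul_le_mul_of_nonneg_left (by omega) (by omega)
    linarith

theorem mem_KSet_iff_of_lt {p q q' s : ℤ} (hp : 1 < p) (hq : 1 < q) (hq' : 1 < q')
    (hpq : Int.gcd p q = 1) (hpq' : Int.gcd p q' = 1) (hmod : q ≡ q' [ZMOD p])
    (hs : 2 * s < p + q - 1) (hs' : 2 * s < p + q' - 1) :
    s ∈ KSet p q ↔ s ∈ KSet p q' := by
  obtain ⟨k, hk⟩ := hmod.dvd
  have hco : IsCoprime p q := Int.isCoprime_iff_gcd_eq_one.mpr hpq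
  have h2 := two_mul_delta hpq
  have h2' := two_mul_delta hpq'
  -- for every `ρ`, the residues attached to `q` and `q'` with their comparison modulo `p`
  have key (ρ : ℤ) (h0 : 0 ≤ ρ) (h1 : ρ ≤ s) : ∃ u v : ℤ, 0 ≤ u ∧ u < p ∧ 0 ≤ v ∧ v < p ∧
      ((p - 1) * (q - 1) / 2 + ρ ∈ Spq p q ↔ 2 * u < p) ∧
      ((p - 1) * (q' - 1) / 2 + ρ ∈ Spq p q' ↔ 2 * v < p) ∧
      p ∣ (p - 1) * (q' - 1) / 2 - (p - 1) * (q - 1) / 2 - (v - u) * q := by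
    obtain ⟨u, hu, hup, hud⟩ := exists_residue hp hpq ((p - 1) * (q - 1) / 2 + ρ)
    obtain ⟨v, hv, hvp, hvd⟩ := exists_residue hp hpq' ((p - 1) * (q' - 1) / 2 + ρ)
    refine ⟨u, v, hu, hup, hv, hvp, mem_iff_two_mul_lt hp hq hpq h0 (by omega) hu hup hud,
      mem_iff_two_mul_lt hp hq' hpq' h0 (by omega) hv hvp hvd, ?_⟩
    obtain ⟨a, ha⟩ := hud
    obtain ⟨b, hb⟩ := hvd
    exact ⟨b - a + v * k, by linear_combination hb - ha + v * hk⟩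
  unfold KSet
  generalize (p - 1) * (q - 1) / 2 = d at *
  generalize (p - 1) * (q' - 1) / 2 = d' at *
  have pattern : (∀ ρ, 0 ≤ ρ → ρ ≤ s → (d + ρ ∈ Spq p q ↔ d' + ρ ∈ Spq p q')) ∨
      (∀ ρ, 0 ≤ ρ → ρ ≤ s → (d + ρ ∈ Spq p q ↔ ¬ d' + ρ ∈ Spq p q')) := by
    by_cases hd : p ∣ d' - d
    · left
      intro ρ h0 h1
      obtain ⟨u, v, hu, hup, hv, hvp, e1, e2, e3⟩ := key ρ h0 h1
      have h3 : p ∣ v - u := hco.dvd_of_dvd_mul_right ((dvd_sub_right hd).mp e3)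
      rw [e1, e2, eq_of_dvd_sub hv hvp hu hup h3]
    · right
      intro ρ h0 h1
      obtain ⟨u, v, hu, hup, hv, hvp, e1, e2, a, ha⟩ := key ρ h0 h1
      have hne : v - u ≠ 0 := by
        intro h0
        exact hd ⟨a, by rw [h0] at ha; linarith⟩
      have h3 : p ∣ 2 * (v - u) := hco.dvd_of_dvd_mul_right
        ⟨(p - 1) * k - 2 * a, by linear_combination h2' - h2 + (p - 1) * hk - 2 * ha⟩
      -- a nonzero multiple of `p` strictly between `-2p` and `2p` is `p` or `-p`
      obtain ⟨w, hw⟩ := h3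
      have hw1 : w < 2 := by
        by_contra hcon
        nlinarith
      have hw2 : -2 < w := by
        by_contra hcon
        nlinarith
      rw [e1, e2]
      interval_cases w <;> omega
  simp only [Set.mem_ofPred_eq]
  refine and_congr_right fun hs0 => forall_congr' fun ρ => forall_congr' fun h0 =>
    forall_congr' fun h1 => ?_
  rcases pattern with hpat | hpat <;>
  · have a0 := hpat 0 le_rfl hs0
    have a1 := hpat ρ h0 h1
    rw [add_zero, add_zero] at a0
    tauto

theorem KSet_subset {p q q' : ℤ} (hp : 1 < p) (hq : 1 < q) (hq' : 1 < q')
    (hpq : Int.gcd p q = 1) (hpq' : Int.gcd p q' = 1) (hmod : q ≡ q' [ZMOD p]) :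
    KSet p q ⊆ KSet p q' := by
  intro s hs
  have hlt := lt_of_mem_KSet hp hq hpq hs
  by_cases hs' : 2 * s < p + q' - 1
  · exact (mem_KSet_iff_of_lt hp hq hq' hpq hpq' hmod (by omega) hs').mp hs
  · -- otherwise `q' - 1 ≤ s` would be transferred from `KSet p q` to `KSet p q'`
    exfalso
    have hr := KSet_of_le hs (r := q' - 1) (by omega) (by omega)
    have hr' := (mem_KSet_iff_of_lt hp hq hq' hpq hpq' hmod (by omega) (by omega)).mp hr
    have := lt_of_mem_KSet hp hq' hpq' hr'
    omega

theorem stmt9 (p q q' : ℤ) (hp : 1 < p) (hq : 1 < q) (hq' : 1 < q')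
    (hpq : Int.gcd p q = 1) (hpq' : Int.gcd p q' = 1)
    (hmod : q ≡ q' [ZMOD p]) :
    ∀ s : ℤ, IsGreatest (KSet p q) s ↔ IsGreatest (KSet p q') s := by
  intro s
  rw [(KSet_subset hp hq hq' hpq hpq' hmod).antisymm
    (KSet_subset hp hq' hq hpq' hpq hmod.symm)]
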